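/- arXiv:2109.11578 — 2 statements merged into one kernel-verified Lean document; each statement's English description precedes it below -/
import Mathlib

section
/- Let N be a nilpotent endomorphism of a finite-dimensional complex vector space H. Then there exists a unique increasing filtration (W_i)_{i∈ℤ} of H by subspaces, with W_i = 0 for i sufficiently small and W_i = H for i sufficiently large, such that N(W_i) ⊆ W_{i−2} for all i ∈ ℤ and, for every i ≥ 0, the map Gr^W_i H → Gr^W_{−i} H induced by N^i is an isomorphism, where Gr^W_i H = W_i/W_{i−1}. -/
namespace Paper

/-! ### Graded quotients -/

/-- The quotient of a subspace `p` by (the trace of) a subspace `q`. -/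
abbrev GrQ {M : Type*} [AddCommGroup M] [Module ℂ M] (p q : Submodule ℂ M) :=
  p ⧸ Submodule.comap p.subtype q

/-- The map induced on the quotients `p/q → p'/q'` by a linear map sending `p` into `p'`
and `q` into `q'`. -/
def inducedQuot {M₁ M₂ : Type*} [AddCommGroup M₁] [Module ℂ M₁] [AddCommGroup M₂] [Module ℂ M₂]
    (f : M₁ →ₗ[ℂ] M₂) (p q : Submodule ℂ M₁) (p' q' : Submodule ℂ M₂)
    (h1 : p ≤ Submodule.comap f p') (h2 : q ≤ Submodule.comap f q') :
    GrQ p q →ₗ[ℂ] GrQ p' q' :=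
  Submodule.mapQ _ _ (f.restrict fun x hx => Submodule.mem_comap.mp (h1 hx))
    (by
      intro x hx
      simp only [Submodule.mem_comap, Submodule.subtype_apply] at hx ⊢
      have hfx : f (x : M₁) ∈ q' := Submodule.mem_comap.mp (h2 hx)
      simpa [LinearMap.restrict_apply] using hfx)

variable {H : Type*} [AddCommGroup H] [Module ℂ H]

/-! ### Weight filtrations -/

/-- `W` is the weight filtration of the nilpotent endomorphism `N`: an increasing filtration,
equal to `0` for small indices and to the whole space for large indices, such that
`N (W i) ⊆ W (i - 2)` and such that for every `i ≥ 0` the map `Gr_i → Gr_{-i}` induced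
by `N ^ i` on the graded pieces `Gr_i = W i / W (i-1)` is an isomorphism. -/
structure IsWeightFiltration (N : Module.End ℂ H) (W : ℤ → Submodule ℂ H) : Prop where
  mono : Monotone W
  eventually_bot : ∃ a : ℤ, ∀ i ≤ a, W i = ⊥
  eventually_top : ∃ b : ℤ, ∀ i : ℤ, b ≤ i → W i = ⊤
  map_le : ∀ i : ℤ, W i ≤ Submodule.comap N (W (i - 2))
  gr_bijective : ∀ i : ℕ,
    ∀ (h1 : W (i : ℤ) ≤ Submodule.comap (N ^ i) (W (-(i : ℤ))))
      (h2 : W ((i : ℤ) - 1) ≤ Submodule.comap (N ^ i) (W (-(i : ℤ) - 1))),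
      Function.Bijective
        (inducedQuot (N ^ i) (W (i : ℤ)) (W ((i : ℤ) - 1)) (W (-(i : ℤ))) (W (-(i : ℤ) - 1))
          h1 h2)

/-! ### Helper lemmas -/

theorem IsWeightFiltration.pow_mem {N : Module.End ℂ H} {W : ℤ → Submodule ℂ H}
    (h : ∀ i : ℤ, W i ≤ Submodule.comap N (W (i - 2))) (k : ℕ) (i : ℤ) {x : H} (hx : x ∈ W i) :
    (N ^ k) x ∈ W (i - 2 * k) := by
  induction k with
  | zero => simpa using hx
  | succ k ih =>
    rw [pow_succ', Module.End.mul_apply]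
    have := h _ ih
    rw [Submodule.mem_comap] at this
    convert this using 2
    push_cast
    ring

theorem inducedQuot_injective_iff {M₁ M₂ : Type*} [AddCommGroup M₁] [Module ℂ M₁]
    [AddCommGroup M₂] [Module ℂ M₂]
    (f : M₁ →ₗ[ℂ] M₂) (p q : Submodule ℂ M₁) (p' q' : Submodule ℂ M₂)
    (h1 : p ≤ Submodule.comap f p') (h2 : q ≤ Submodule.comap f q') :
    Function.Injective (inducedQuot f p q p' q' h1 h2) ↔ ∀ x ∈ p, f x ∈ q' → x ∈ q := by
  rw [injective_iff_map_eq_zero]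
  constructor
  · intro h x hx hfx
    have := h (Submodule.Quotient.mk ⟨x, hx⟩) (by
      rw [inducedQuot, Submodule.mapQ_apply, Submodule.Quotient.mk_eq_zero]
      simpa using hfx)
    rw [Submodule.Quotient.mk_eq_zero] at this
    simpa using this
  · intro h a
    obtain ⟨⟨x, hx⟩, rfl⟩ := Submodule.Quotient.mk_surjective _ a
    intro ha
    rw [inducedQuot, Submodule.mapQ_apply, Submodule.Quotient.mk_eq_zero] at ha
    rw [Submodule.Quotient.mk_eq_zero]
    simpa using h x hx (by simpa using ha)

theorem inducedQuot_surjective_iff {M₁ M₂ : Type*} [AddCommGroup M₁] [Module ℂ M₁]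
    [AddCommGroup M₂] [Module ℂ M₂]
    (f : M₁ →ₗ[ℂ] M₂) (p q : Submodule ℂ M₁) (p' q' : Submodule ℂ M₂)
    (h1 : p ≤ Submodule.comap f p') (h2 : q ≤ Submodule.comap f q') :
    Function.Surjective (inducedQuot f p q p' q' h1 h2) ↔ ∀ y ∈ p', ∃ x ∈ p, f x - y ∈ q' := by
  constructor
  · intro h y hy
    obtain ⟨a, ha⟩ := h (Submodule.Quotient.mk ⟨y, hy⟩)
    obtain ⟨⟨x, hx⟩, rfl⟩ := Submodule.Quotient.mk_surjective _ a
    rw [inducedQuot, Submodule.mapQ_apply, Submodule.Quotient.eq] at ha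
    exact ⟨x, hx, by simpa using ha⟩
  · intro h b
    obtain ⟨⟨y, hy⟩, rfl⟩ := Submodule.Quotient.mk_surjective _ b
    obtain ⟨x, hx, hxy⟩ := h y hy
    refine ⟨Submodule.Quotient.mk ⟨x, hx⟩, ?_⟩
    rw [inducedQuot, Submodule.mapQ_apply, Submodule.Quotient.eq]
    simpa using hxy

/-- For a weight filtration, `W (-i) = N ^ i (W i)`. -/
theorem IsWeightFiltration.map_pow {N : Module.End ℂ H} {W : ℤ → Submodule ℂ H}
    (h : IsWeightFiltration N W) (i : ℕ) : W (-(i : ℤ)) = (W i).map (N ^ i) := by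
  have hp : ∀ (k : ℕ) (i : ℤ) {x : H}, x ∈ W i → (N ^ k) x ∈ W (i - 2 * k) :=
    fun k i x hx => IsWeightFiltration.pow_mem h.map_le k i hx
  obtain ⟨a, ha⟩ := h.eventually_bot
  have key : ∀ k i : ℕ, -a ≤ (i : ℤ) + k → W (-(i : ℤ)) ≤ (W i).map (N ^ i) := by
    intro k
    induction k with
    | zero =>
      intro i hi
      rw [ha _ (by push_cast at hi; lia)]
      exact bot_le
    | succ k ih =>
      intro i hi y hy
      have hs := (h.gr_bijective i
        (fun x hx => h.mono (by lia) (hp i _ hx)) (fun x hx => h.mono (by lia) (hp i _ hx))).2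
      rw [inducedQuot_surjective_iff] at hs
      obtain ⟨x, hx, hxy⟩ := hs y hy
      have h3 := ih (i + 1) (by push_cast at hi ⊢; lia)
        (show (N ^ i) x - y ∈ W (-((i + 1 : ℕ) : ℤ)) from h.mono (by push_cast; lia) hxy)
      obtain ⟨z, hz, hzy⟩ := h3
      refine ⟨x - N z, Submodule.sub_mem _ hx (h.mono (by push_cast; lia) (h.map_le _ hz)), ?_⟩
      rw [pow_succ, Module.End.mul_apply] at hzy
      rw [map_sub, hzy]
      abel
  apply le_antisymm
  · exact key (-a).toNat i (by lia)
  · rintro _ ⟨x, hx, rfl⟩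
    exact h.mono (by lia) (hp i _ hx)

/-- For a weight filtration, `W (i - 1)` is the preimage of `W (-i - 1)` under `N ^ i`. -/
theorem IsWeightFiltration.comap_pow {N : Module.End ℂ H} {W : ℤ → Submodule ℂ H}
    (h : IsWeightFiltration N W) (i : ℕ) :
    W ((i : ℤ) - 1) = (W (-(i : ℤ) - 1)).comap (N ^ i) := by
  have hp : ∀ (k : ℕ) (i : ℤ) {x : H}, x ∈ W i → (N ^ k) x ∈ W (i - 2 * k) :=
    fun k i x hx => IsWeightFiltration.pow_mem h.map_le k i hx
  obtain ⟨b, hb⟩ := h.eventually_top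
  apply le_antisymm
  · intro x hx
    exact h.mono (by lia) (hp i _ hx)
  · intro x hx
    rw [Submodule.mem_comap] at hx
    have key : ∀ k : ℕ, x ∈ W ((i : ℤ) + k - 1) → x ∈ W ((i : ℤ) - 1) := by
      intro k
      induction k with
      | zero => intro hk; simpa using hk
      | succ k ih =>
        intro hk
        apply ih
        have hs := (h.gr_bijective (i + k)
          (fun x hx => h.mono (by lia) (hp _ _ hx)) (fun x hx => h.mono (by lia) (hp _ _ hx))).1
        rw [inducedQuot_injective_iff] at hs
        have := hs x (h.mono (by push_cast; lia) hk) (by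
          rw [add_comm i k, pow_add, Module.End.mul_apply]
          exact h.mono (by push_cast; lia) (hp k _ hx))
        exact h.mono (by push_cast; lia) this
    apply key b.toNat.succ
    rw [hb _ (by push_cast; lia)]
    trivial

theorem IsWeightFiltration.unique {N : Module.End ℂ H} {W W' : ℤ → Submodule ℂ H}
    (h : IsWeightFiltration N W) (h' : IsWeightFiltration N W') : W = W' := by
  obtain ⟨b, hb⟩ := h.eventually_top
  obtain ⟨b', hb'⟩ := h'.eventually_top
  have key : ∀ k m : ℕ, max b b' ≤ (m : ℤ) + k →
      W m = W' m ∧ W (-(m : ℤ)) = W' (-(m : ℤ)) := by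
    intro k
    induction k with
    | zero =>
      intro m hm
      have h1 : W m = W' m := by
        rw [hb _ (by push_cast at hm; lia), hb' _ (by push_cast at hm; lia)]
      exact ⟨h1, by rw [h.map_pow, h'.map_pow, h1]⟩
    | succ k ih =>
      intro m hm
      have h2 := (ih (m + 2) (by push_cast at hm ⊢; lia)).2
      have h1 : W m = W' m := by
        have e := h.comap_pow (m + 1)
        have e' := h'.comap_pow (m + 1)
        have e1 : ((m + 1 : ℕ) : ℤ) - 1 = m := by push_cast; ring
        have e2 : -((m + 1 : ℕ) : ℤ) - 1 = -((m + 2 : ℕ) : ℤ) := by push_cast; ring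
        rw [e1, e2] at e e'
        rw [e, e', h2]
      exact ⟨h1, by rw [h.map_pow, h'.map_pow, h1]⟩
  funext i
  obtain ⟨m, rfl | rfl⟩ := i.eq_nat_or_neg
  · exact (key (max b b').toNat m (by lia)).1
  · exact (key (max b b').toNat m (by lia)).2

/-- The explicit weight filtration. -/
def weightFil (N : Module.End ℂ H) (l : ℤ) : Submodule ℂ H :=
  ⨆ j : ℕ, LinearMap.ker (N ^ (l + j + 1).toNat) ⊓ LinearMap.range (N ^ j)

theorem ker_pow_mono (N : Module.End ℂ H) {a b : ℕ} (hab : a ≤ b) :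
    LinearMap.ker (N ^ a) ≤ LinearMap.ker (N ^ b) := by
  intro x hx
  rw [LinearMap.mem_ker] at hx ⊢
  obtain ⟨c, rfl⟩ := Nat.exists_eq_add_of_le' hab
  rw [pow_add, Module.End.mul_apply, hx, map_zero]

theorem weightFil_le {N : Module.End ℂ H} {l : ℤ} {p : Submodule ℂ H}
    (h : ∀ (j : ℕ) (v : H), (N ^ ((l + j + 1).toNat + j)) v = 0 → 0 < l + j + 1 →
      (N ^ j) v ∈ p) : weightFil N l ≤ p := by
  refine iSup_le fun j => ?_
  rintro _ ⟨hx, v, rfl⟩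
  by_cases hl : 0 < l + j + 1
  · refine h j v ?_ hl
    rw [pow_add, Module.End.mul_apply]
    exact hx
  · have : (l + j + 1).toNat = 0 := by lia
    rw [this] at hx
    have hx' : (N ^ j) v = 0 := by simpa using hx
    rw [hx']
    exact zero_mem _

theorem mem_weightFil {N : Module.End ℂ H} {l : ℤ} (j : ℕ) (v : H)
    (h : (N ^ ((l + j + 1).toNat + j)) v = 0) : (N ^ j) v ∈ weightFil N l := by
  refine Submodule.mem_iSup_of_mem j ⟨?_, v, rfl⟩
  rw [pow_add, Module.End.mul_apply] at h
  exact h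

theorem weightFil_neg_le (N : Module.End ℂ H) (i : ℕ) :
    weightFil N (-(i : ℤ)) ≤ (weightFil N i).map (N ^ i) := by
  refine weightFil_le fun j v hv hl => ?_
  obtain ⟨k, rfl⟩ : ∃ k, j = i + k := ⟨j - i, by lia⟩
  refine ⟨(N ^ k) v, mem_weightFil k v ?_, ?_⟩
  · convert hv using 3
    lia
  · rw [pow_add, Module.End.mul_apply]

theorem isWeightFiltration_weightFil (N : Module.End ℂ H) (hN : IsNilpotent N) :
    IsWeightFiltration N (weightFil N) := by
  obtain ⟨n, hn⟩ := hN
  have hmono : Monotone (weightFil N) := by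
    intro a b hab
    exact iSup_mono fun j => inf_le_inf_right _ (ker_pow_mono N (by lia))
  have hmap : ∀ i : ℤ, weightFil N i ≤ Submodule.comap N (weightFil N (i - 2)) := by
    intro i
    refine weightFil_le fun j v hv hl => ?_
    rw [Submodule.mem_comap, ← Module.End.mul_apply, ← pow_succ']
    refine mem_weightFil _ _ ?_
    convert hv using 3
    push_cast
    lia
  refine ⟨hmono, ⟨-n, fun i hi => ?_⟩, ⟨n, fun i hi => ?_⟩, hmap, fun i h1 h2 => ⟨?_, ?_⟩⟩
  · rw [eq_bot_iff]
    refine weightFil_le fun j v hv hl => ?_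
    obtain ⟨k, rfl⟩ : ∃ k, j = n + k := ⟨j - n, by lia⟩
    rw [pow_add, hn]
    simp
  · rw [eq_top_iff]
    intro x _
    refine mem_weightFil 0 x ?_
    obtain ⟨k, hk⟩ : ∃ k, (i + (0 : ℕ) + 1).toNat + 0 = n + k :=
      ⟨(i + (0 : ℕ) + 1).toNat + 0 - n, by lia⟩
    rw [hk, pow_add, hn]
    simp
  · rw [inducedQuot_injective_iff]
    intro x hx hfx
    have e2 : -(i : ℤ) - 1 = -((i + 1 : ℕ) : ℤ) := by push_cast; ring
    rw [e2] at hfx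
    obtain ⟨y, hy, hyx⟩ := weightFil_neg_le N (i + 1) hfx
    have h3 : N y ∈ weightFil N ((i : ℤ) - 1) := hmono (by push_cast; lia) (hmap _ hy)
    have h4 : x - N y ∈ weightFil N ((i : ℤ) - 1) := by
      refine mem_weightFil 0 (x - N y) ?_
      have : ((i : ℤ) - 1 + (0 : ℕ) + 1).toNat + 0 = i := by lia
      rw [this, map_sub, ← hyx, pow_succ, Module.End.mul_apply, sub_self]
    simpa using add_mem h4 h3
  · rw [inducedQuot_surjective_iff]
    intro y hy
    obtain ⟨x, hx, hxy⟩ := weightFil_neg_le N i hy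
    exact ⟨x, hx, by rw [hxy, sub_self]; exact zero_mem _⟩

/-- Let `N` be a nilpotent endomorphism of a finite-dimensional complex
vector space `H`. Then there exists a unique increasing filtration `(W i)_{i ∈ ℤ}` of `H`,
with `W i = 0` for `i` small and `W i = H` for `i` large, such that `N (W i) ⊆ W (i-2)`
for all `i` and, for every `i ≥ 0`, the map `Gr_i H → Gr_{-i} H` induced by `N ^ i` is an
isomorphism. -/
theorem weight_filtration_existsUnique [FiniteDimensional ℂ H]
    (N : Module.End ℂ H) (hN : IsNilpotent N) :
    ∃! W : ℤ → Submodule ℂ H, IsWeightFiltration N W := by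
  exact ⟨weightFil N, isWeightFiltration_weightFil N hN,
    fun W hW => hW.unique (isWeightFiltration_weightFil N hN)⟩

end Paper
end

section
/- Let (N, Ñ) be infinitesimal automorphisms of (H, H̃, S), with weight filtrations W^N, W^Ñ. Then S(a, b̃) = 0 whenever a ∈ Ker N ∩ W^N_{−1} and b̃ ∈ Ker Ñ, and also whenever a ∈ Ker N and b̃ ∈ Ker Ñ ∩ W^{Ñ}_{−1}; consequently S descends to a well-defined bilinear pairing (Ker N)/(Ker N ∩ W^N_{−1}) × (Ker Ñ)/(Ker Ñ ∩ W^{Ñ}_{−1}) → ℂ, and this descended pairing is non-degenerate. -/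
namespace Paper

/-! ### Bilinear pairings between two spaces -/

/-- A bilinear pairing between two complex vector spaces is non-degenerate. -/
def Nondeg {M₁ M₂ : Type*} [AddCommGroup M₁] [Module ℂ M₁] [AddCommGroup M₂] [Module ℂ M₂]
    (S : M₁ →ₗ[ℂ] M₂ →ₗ[ℂ] ℂ) : Prop :=
  (∀ x : M₁, (∀ y : M₂, S x y = 0) → x = 0) ∧ (∀ y : M₂, (∀ x : M₁, S x y = 0) → y = 0)

/-- The orthogonal complement in `M₂` of a subspace `p ⊆ M₁`, with respect to a
bilinear pairing `S : M₁ × M₂ → ℂ`. -/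
def rightOrtho {M₁ M₂ : Type*} [AddCommGroup M₁] [Module ℂ M₁] [AddCommGroup M₂] [Module ℂ M₂]
    (S : M₁ →ₗ[ℂ] M₂ →ₗ[ℂ] ℂ) (p : Submodule ℂ M₁) : Submodule ℂ M₂ where
  carrier := {y | ∀ x ∈ p, S x y = 0}
  add_mem' := by
    intro a b ha hb x hx
    rw [map_add, ha x hx, hb x hx, add_zero]
  zero_mem' := by
    intro x hx
    simp
  smul_mem' := by
    intro c y hy x hx
    rw [map_smul, hy x hx, smul_zero]

/-- The orthogonal complement in `M₁` of a subspace `q ⊆ M₂`, with respect to a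
bilinear pairing `S : M₁ × M₂ → ℂ`. -/
def leftOrtho {M₁ M₂ : Type*} [AddCommGroup M₁] [Module ℂ M₁] [AddCommGroup M₂] [Module ℂ M₂]
    (S : M₁ →ₗ[ℂ] M₂ →ₗ[ℂ] ℂ) (q : Submodule ℂ M₂) : Submodule ℂ M₁ where
  carrier := {x | ∀ y ∈ q, S x y = 0}
  add_mem' := by
    intro a b ha hb y hy
    simp [map_add, ha y hy, hb y hy]
  zero_mem' := by
    intro y hy
    simp
  smul_mem' := by
    intro c x hx y hy
    simp [map_smul, hx y hy]

variable {H : Type*} [AddCommGroup H] [Module ℂ H]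

theorem IsWeightFiltration.pow_le {N : Module.End ℂ H} {W : ℤ → Submodule ℂ H}
    (hW : IsWeightFiltration N W) (k : ℕ) :
    ∀ (i : ℤ) (x : H), x ∈ W i → (N ^ k) x ∈ W (i - 2 * k) := by
  induction k with
  | zero => intro i x hx; simpa using hx
  | succ k ih =>
    intro i x hx
    rw [pow_succ', Module.End.mul_apply]
    have h := hW.map_le _ (ih i x hx)
    rw [Submodule.mem_comap] at h
    have e : i - 2 * ((k + 1 : ℕ) : ℤ) = i - 2 * (k : ℤ) - 2 := by push_cast; ring
    rw [e]; exact h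

theorem IsWeightFiltration.inj {N : Module.End ℂ H} {W : ℤ → Submodule ℂ H}
    (hW : IsWeightFiltration N W) (i : ℕ) (x : H) (hx : x ∈ W i) (h0 : (N ^ i) x = 0) :
    x ∈ W ((i : ℤ) - 1) := by
  have h1 : W (i : ℤ) ≤ Submodule.comap (N ^ i) (W (-(i : ℤ))) := fun y hy => by
    have := hW.pow_le i _ y hy
    rwa [show (i : ℤ) - 2 * i = -i by ring] at this
  have h2 : W ((i : ℤ) - 1) ≤ Submodule.comap (N ^ i) (W (-(i : ℤ) - 1)) := fun y hy => by
    have := hW.pow_le i _ y hy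
    rwa [show (i : ℤ) - 1 - 2 * i = -i - 1 by ring] at this
  have hb := (hW.gr_bijective i h1 h2).1
  have key : (Submodule.Quotient.mk (⟨x, hx⟩ : W (i : ℤ)) :
      GrQ (W (i : ℤ)) (W ((i : ℤ) - 1))) = 0 := by
    apply hb
    rw [map_zero]
    unfold inducedQuot
    rw [← Submodule.mkQ_apply, Submodule.mkQ_apply, Submodule.mapQ_apply,
      Submodule.Quotient.mk_eq_zero]
    simp [LinearMap.restrict_apply, h0]
  rw [Submodule.Quotient.mk_eq_zero] at key
  exact key

theorem IsWeightFiltration.surj {N : Module.End ℂ H} {W : ℤ → Submodule ℂ H}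
    (hW : IsWeightFiltration N W) (i : ℕ) (x : H) (hx : x ∈ W (-(i : ℤ))) :
    ∃ y, x - (N ^ i) y ∈ W (-(i : ℤ) - 1) := by
  have h1 : W (i : ℤ) ≤ Submodule.comap (N ^ i) (W (-(i : ℤ))) := fun y hy => by
    have := hW.pow_le i _ y hy
    rwa [show (i : ℤ) - 2 * i = -i by ring] at this
  have h2 : W ((i : ℤ) - 1) ≤ Submodule.comap (N ^ i) (W (-(i : ℤ) - 1)) := fun y hy => by
    have := hW.pow_le i _ y hy
    rwa [show (i : ℤ) - 1 - 2 * i = -i - 1 by ring] at this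
  obtain ⟨q, hq⟩ := (hW.gr_bijective i h1 h2).2 (Submodule.Quotient.mk ⟨x, hx⟩)
  obtain ⟨y, rfl⟩ := Submodule.Quotient.mk_surjective _ q
  unfold inducedQuot at hq
  rw [Submodule.mapQ_apply] at hq
  have h := (Submodule.Quotient.eq _).1 hq.symm
  exact ⟨y, h⟩

/-- Elements killed by `N ^ k` lie in `W (k - 1)`. -/
theorem IsWeightFiltration.ker_pow_le {N : Module.End ℂ H} {W : ℤ → Submodule ℂ H}
    (hW : IsWeightFiltration N W) (k : ℕ) (x : H) (h0 : (N ^ k) x = 0) :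
    x ∈ W ((k : ℤ) - 1) := by
  have step : ∀ n : ℕ, x ∈ W ((k + n : ℕ) - 1 : ℤ) → x ∈ W ((k : ℤ) - 1) := by
    intro n
    induction n with
    | zero => intro h; simpa using h
    | succ n ih =>
      intro h
      apply ih
      apply hW.inj
      · rwa [show (((k + (n + 1) : ℕ) : ℤ) - 1) = ((k + n : ℕ) : ℤ) by push_cast; ring] at h
      · rw [add_comm, pow_add, Module.End.mul_apply, h0, map_zero]
  obtain ⟨b, hb⟩ := hW.eventually_top
  apply step (b.toNat + 1)
  rw [hb _ (by push_cast; have := Int.self_le_toNat b; omega)]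
  trivial

theorem IsWeightFiltration.le_range {N : Module.End ℂ H} {W : ℤ → Submodule ℂ H}
    (hW : IsWeightFiltration N W) : W (-1) ≤ LinearMap.range N := by
  obtain ⟨a, ha⟩ := hW.eventually_bot
  have step : ∀ n : ℕ, W (-((n + 1 : ℕ) : ℤ)) ≤ LinearMap.range N → W (-1) ≤ LinearMap.range N := by
    intro n
    induction n with
    | zero => intro h; simpa using h
    | succ n ih =>
      intro h
      apply ih
      intro x hx
      obtain ⟨y, hy⟩ := hW.surj (n + 1) x hx
      rw [show -((n + 1 : ℕ) : ℤ) - 1 = -((n + 1 + 1 : ℕ) : ℤ) by push_cast; ring] at hy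
      have h3 : (N ^ (n + 1)) y ∈ LinearMap.range N :=
        ⟨(N ^ n) y, by rw [pow_succ', Module.End.mul_apply]⟩
      simpa using add_mem (h hy) h3
  apply step (-a).toNat
  rw [ha _ (by push_cast; have := Int.self_le_toNat (-a); omega)]
  exact bot_le

theorem IsWeightFiltration.range_le {N : Module.End ℂ H} {W : ℤ → Submodule ℂ H}
    (hW : IsWeightFiltration N W) (x : H) (hx : x ∈ LinearMap.ker N)
    (hr : x ∈ LinearMap.range N) : x ∈ W (-1) := by
  obtain ⟨y, rfl⟩ := hr
  have h := hW.ker_pow_le 2 y (by rw [pow_two, Module.End.mul_apply]; exact hx)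
  have := hW.map_le _ h
  norm_num at this
  exact this

theorem mem_range_of_ortho [FiniteDimensional ℂ H]
    {H' : Type*} [AddCommGroup H'] [Module ℂ H'] [FiniteDimensional ℂ H']
    (S : H →ₗ[ℂ] H' →ₗ[ℂ] ℂ) (hS : Nondeg S)
    {N : Module.End ℂ H} {N' : Module.End ℂ H'}
    (hNN' : ∀ (a : H) (b : H'), S (N a) b + S a (N' b) = 0)
    (a : H) (ha : ∀ b ∈ LinearMap.ker N', S a b = 0) : a ∈ LinearMap.range N := by
  by_contra hn
  obtain ⟨f, hf, hf0⟩ := Submodule.exists_le_ker_of_notMem hn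
  have i1 : Function.Injective S := by
    rw [injective_iff_map_eq_zero]
    intro x hx
    exact hS.1 x fun y => by rw [hx]; rfl
  have i2 : Function.Injective S.flip := by
    rw [injective_iff_map_eq_zero]
    intro y hy
    exact hS.2 y fun x => by rw [← LinearMap.flip_apply, hy]; rfl
  have hp : S.IsPerfPair := .of_injective i1 i2
  obtain ⟨b, rfl⟩ := hp.bijective_right.2 f
  apply hf
  rw [LinearMap.flip_apply]
  apply ha
  rw [LinearMap.mem_ker]
  apply hS.2
  intro x
  have h1 : S (N x) b = 0 := hf0 ⟨x, rfl⟩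
  have := hNN' x b
  rwa [h1, zero_add] at this

/-- For infinitesimal automorphisms `(N, N')` of `(H, H', S)`, the pairing
`S` vanishes on `(Ker N ∩ W^N_{-1}) × Ker N'` and on `Ker N × (Ker N' ∩ W^{N'}_{-1})`, so it
descends to a pairing `(Ker N)/(Ker N ∩ W^N_{-1}) × (Ker N')/(Ker N' ∩ W^{N'}_{-1}) → ℂ`,
and this descended pairing is non-degenerate. -/
theorem kernel_pairing_descends_nondegenerate [FiniteDimensional ℂ H]
    {H' : Type*} [AddCommGroup H'] [Module ℂ H'] [FiniteDimensional ℂ H']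
    (S : H →ₗ[ℂ] H' →ₗ[ℂ] ℂ) (hS : Nondeg S)
    {N : Module.End ℂ H} {N' : Module.End ℂ H'}
    (hN : IsNilpotent N) (hN' : IsNilpotent N')
    (hNN' : ∀ (a : H) (b : H'), S (N a) b + S a (N' b) = 0)
    {W : ℤ → Submodule ℂ H} {W' : ℤ → Submodule ℂ H'}
    (hW : IsWeightFiltration N W) (hW' : IsWeightFiltration N' W') :
    (∀ a ∈ LinearMap.ker N ⊓ W (-1), ∀ b ∈ LinearMap.ker N', S a b = 0) ∧
    (∀ a ∈ LinearMap.ker N, ∀ b ∈ LinearMap.ker N' ⊓ W' (-1), S a b = 0) ∧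
    ∃ T : GrQ (LinearMap.ker N) (W (-1)) →ₗ[ℂ] GrQ (LinearMap.ker N') (W' (-1)) →ₗ[ℂ] ℂ,
      (∀ (a : LinearMap.ker N) (b : LinearMap.ker N'),
          T (Submodule.Quotient.mk a) (Submodule.Quotient.mk b) = S (a : H) (b : H')) ∧
        Nondeg T := by
  have v1 : ∀ a ∈ LinearMap.ker N ⊓ W (-1), ∀ b ∈ LinearMap.ker N', S a b = 0 := by
    rintro a ⟨-, ha⟩ b hb
    obtain ⟨c, rfl⟩ := hW.le_range ha
    have := hNN' c b
    rwa [LinearMap.mem_ker.1 hb, map_zero, add_zero] at this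
  have v2 : ∀ a ∈ LinearMap.ker N, ∀ b ∈ LinearMap.ker N' ⊓ W' (-1), S a b = 0 := by
    rintro a ha b ⟨-, hb⟩
    obtain ⟨c, rfl⟩ := hW'.le_range hb
    have := hNN' a c
    rwa [LinearMap.mem_ker.1 ha, map_zero, LinearMap.zero_apply, zero_add] at this
  refine ⟨v1, v2, ?_⟩
  let S0 : LinearMap.ker N →ₗ[ℂ] LinearMap.ker N' →ₗ[ℂ] ℂ :=
    S.domRestrict₁₂ (LinearMap.ker N) (LinearMap.ker N')
  let T1 : LinearMap.ker N' →ₗ[ℂ] GrQ (LinearMap.ker N) (W (-1)) →ₗ[ℂ] ℂ :=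
    (Submodule.liftQ (Submodule.comap (LinearMap.ker N).subtype (W (-1))) S0 (by
      intro a ha
      rw [LinearMap.mem_ker]
      ext b
      exact v1 a ⟨a.2, ha⟩ b b.2)).flip
  let T : GrQ (LinearMap.ker N) (W (-1)) →ₗ[ℂ] GrQ (LinearMap.ker N') (W' (-1)) →ₗ[ℂ] ℂ :=
    (Submodule.liftQ (Submodule.comap (LinearMap.ker N').subtype (W' (-1))) T1 (by
      intro b hb
      rw [LinearMap.mem_ker]
      apply LinearMap.ext
      intro q
      obtain ⟨a, rfl⟩ := Submodule.Quotient.mk_surjective _ q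
      exact v2 a a.2 b ⟨b.2, hb⟩)).flip
  have hT : ∀ (a : LinearMap.ker N) (b : LinearMap.ker N'),
      T (Submodule.Quotient.mk a) (Submodule.Quotient.mk b) = S (a : H) (b : H') :=
    fun a b => rfl
  refine ⟨T, hT, ?_, ?_⟩
  · intro q hq
    obtain ⟨a, rfl⟩ := Submodule.Quotient.mk_surjective _ q
    rw [Submodule.Quotient.mk_eq_zero]
    exact hW.range_le a a.2 (mem_range_of_ortho S hS hNN' a fun b hb => by
      rw [← hq (Submodule.Quotient.mk ⟨b, hb⟩), hT])
  · intro q hq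
    obtain ⟨b, rfl⟩ := Submodule.Quotient.mk_surjective _ q
    rw [Submodule.Quotient.mk_eq_zero]
    refine hW'.range_le b b.2 (mem_range_of_ortho S.flip ⟨hS.2, hS.1⟩ (N' := N) ?_ b ?_)
    · intro x y
      rw [LinearMap.flip_apply, LinearMap.flip_apply, add_comm]
      exact hNN' y x
    · intro a ha
      rw [LinearMap.flip_apply, ← hq (Submodule.Quotient.mk ⟨a, ha⟩), hT]

end Paper
end
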